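/- The Goemans–Williamson rounding guarantee: let W be a symmetric matrix with nonnegative entries, X a positive semidefinite matrix with X_ii = 1 for all i, and write X_ij = uᵢᵀuⱼ with unit vectors uᵢ. Then for z ∼ N(0,I) and x = sign(Xz-components), E[(1/2)Σ_{ij} w_{ij}(1 − xᵢxⱼ)] ≥ α·(1/2)Σ_{ij} w_{ij}(1 − X_{ij}), where α = (2/π)·min_{t∈[−1,1]} arccos(t)/(1−t) and xᵢ = sign(uᵢᵀz). -/

import Mathlib

open MeasureTheory ProbabilityTheory Matrix

lemma gw_law {d : ℕ} (u v : Fin d → ℝ) (hu : ∑ k, u k ^ 2 = 1) (hv : ∑ k, v k ^ 2 = 1)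
    (t s : ℝ) (ht : u ⬝ᵥ v = t) (hts : t ^ 2 + s ^ 2 = 1) :
    (Measure.pi fun _ : Fin d => gaussianReal 0 1).map (fun z => (u ⬝ᵥ z, v ⬝ᵥ z)) =
    ((gaussianReal 0 1).prod (gaussianReal 0 1)).map (fun p : ℝ × ℝ => (p.1, t * p.1 + s * p.2)) := by
  let A : (Fin d → ℝ) →L[ℝ] ℝ × ℝ :=
    (∑ k, u k • ContinuousLinearMap.proj (R := ℝ) (φ := fun _ : Fin d => ℝ) k).prod
    (∑ k, v k • ContinuousLinearMap.proj (R := ℝ) (φ := fun _ : Fin d => ℝ) k)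
  let B : ℝ × ℝ →L[ℝ] ℝ × ℝ :=
    (ContinuousLinearMap.fst ℝ ℝ ℝ).prod
      (t • ContinuousLinearMap.fst ℝ ℝ ℝ + s • ContinuousLinearMap.snd ℝ ℝ ℝ)
  have hA : (fun z => (u ⬝ᵥ z, v ⬝ᵥ z)) = A := by
    ext z <;> simp [A, dotProduct]
  have hB : (fun p : ℝ × ℝ => (p.1, t * p.1 + s * p.2)) = B := by
    ext z <;> simp [B]
  rw [hA, hB]
  haveI : IsProbabilityMeasure ((Measure.pi fun _ : Fin d => gaussianReal 0 1).map A) :=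
    Measure.isProbabilityMeasure_map A.continuous.aemeasurable
  haveI : IsProbabilityMeasure (((gaussianReal 0 1).prod (gaussianReal 0 1)).map B) :=
    Measure.isProbabilityMeasure_map B.continuous.aemeasurable
  apply Measure.ext_of_charFunDual
  ext L
  have key : ∀ M : StrongDual ℝ ℝ, charFunDual (gaussianReal 0 1) M =
      Complex.exp ((-(M 1) ^ 2 / 2 : ℝ)) := by
    intro M
    have h : charFunDual (gaussianReal 0 1) M = charFun (gaussianReal 0 1) (M 1) := by
      rw [charFunDual_apply, charFun_apply_real]
      congr 1; ext x
      have : M x = M 1 * x := by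
        have := M.map_smul x 1
        simp at this; rw [this]; ring
      rw [this]; push_cast; rfl
    rw [h, charFun_gaussianReal]
    push_cast; congr 1; ring_nf
  have hL : ∀ a b : ℝ, L (a, b) = a * L (1, 0) + b * L (0, 1) := by
    intro a b
    have : ((a, b) : ℝ × ℝ) = a • (1, 0) + b • (0, 1) := by simp
    rw [this, map_add, map_smul, map_smul]; simp
  rw [charFunDual_map, charFunDual_map, charFunDual_pi, charFunDual_prod]
  simp_rw [key]
  rw [← Complex.exp_sum, ← Complex.exp_add, ← Complex.ofReal_sum, ← Complex.ofReal_add]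
  congr 2
  have hA1 : ∀ k, A (Pi.single k 1) = (u k, v k) := by
    intro k
    rw [← hA]; simp
  have e1 : ∀ k, ((L.comp A).comp (ContinuousLinearMap.single ℝ (fun _ : Fin d => ℝ) k)) 1
      = u k * L (1, 0) + v k * L (0, 1) := by
    intro k
    simp only [ContinuousLinearMap.comp_apply, ContinuousLinearMap.single_apply]
    rw [hA1, hL]
  have e2 : ((L.comp B).comp (ContinuousLinearMap.inl ℝ ℝ ℝ)) 1 = L (1,0) + t * L (0,1) := by
    simp only [ContinuousLinearMap.comp_apply, ContinuousLinearMap.inl_apply]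
    rw [← hB]; simp only; rw [hL]; ring
  have e3 : ((L.comp B).comp (ContinuousLinearMap.inr ℝ ℝ ℝ)) 1 = s * L (0,1) := by
    simp only [ContinuousLinearMap.comp_apply, ContinuousLinearMap.inr_apply]
    rw [← hB]; simp only; rw [hL]; ring
  simp_rw [e1]; rw [e2, e3]
  generalize L (1,0) = p
  generalize L (0,1) = q
  have : ∑ k, -(u k * p + v k * q) ^ 2 / 2 = -(p^2/2) * ∑ k, u k ^ 2 - p * q * (u ⬝ᵥ v)
      - q^2/2 * ∑ k, v k ^ 2 := by
    simp only [dotProduct, Finset.mul_sum, ← Finset.sum_sub_distrib]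
    apply Finset.sum_congr rfl; intros; ring
  rw [this, hu, hv, ht]
  linear_combination (q^2/2) * hts

lemma gw_polar (G : ℝ × ℝ → ℝ) (hG : ∀ r a b : ℝ, 0 < r → G (r * a, r * b) = G (a, b)) :
    ∫ p, G p ∂((gaussianReal 0 1).prod (gaussianReal 0 1)) =
      (1 / (2 * Real.pi)) * ∫ φ in (-Real.pi)..Real.pi, G (Real.cos φ, Real.sin φ) := by
  have h1 : (gaussianReal 0 1).prod (gaussianReal 0 1) =
      (volume : Measure (ℝ × ℝ)).withDensity
        (fun z => gaussianPDF 0 1 z.1 * gaussianPDF 0 1 z.2) := by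
    rw [gaussianReal_of_var_ne_zero _ one_ne_zero,
      prod_withDensity (measurable_gaussianPDF _ _) (measurable_gaussianPDF _ _)]
    rfl
  rw [h1, integral_withDensity_eq_integral_toReal_smul (by fun_prop)
    (by filter_upwards with z; simp [gaussianPDF, ENNReal.mul_lt_top])]
  rw [← integral_comp_polarCoord_symm]
  have h2 : ∫ p in polarCoord.target, p.1 • ((gaussianPDF 0 1 (polarCoord.symm p).1 *
        gaussianPDF 0 1 (polarCoord.symm p).2).toReal • G (polarCoord.symm p)) =
      ∫ p in Set.Ioi (0:ℝ) ×ˢ Set.Ioo (-Real.pi) Real.pi,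
        ((1 / (2 * Real.pi)) * (p.1 ^ (1:ℝ) * Real.exp (-(1/2) * p.1 ^ (2:ℝ)))) *
          G (Real.cos p.2, Real.sin p.2) := by
    apply setIntegral_congr_fun polarCoord.open_target.measurableSet
    rintro ⟨r, φ⟩ ⟨hr, -⟩
    simp only [Set.mem_Ioi] at hr
    simp only [polarCoord_symm_apply, ENNReal.toReal_mul, toReal_gaussianPDF, smul_eq_mul]
    rw [hG _ _ _ hr, gaussianPDFReal, gaussianPDFReal]
    have h3 : Real.exp (-(r * Real.cos φ - 0) ^ 2 / (2 * ((1 : NNReal) : ℝ))) *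
        Real.exp (-(r * Real.sin φ - 0) ^ 2 / (2 * ((1 : NNReal) : ℝ))) =
        Real.exp (-(1/2) * r ^ (2:ℝ)) := by
      rw [← Real.exp_add]
      congr 1
      rw [Real.rpow_two]
      simp
      linear_combination (-(r^2)/2) * Real.sin_sq_add_cos_sq φ
    rw [← h3, Real.rpow_one]
    have h4 : (√(2 * Real.pi * ((1 : NNReal) : ℝ)))⁻¹ * (√(2 * Real.pi * ((1 : NNReal) : ℝ)))⁻¹
        = 1 / (2 * Real.pi) := by
      rw [← mul_inv, Real.mul_self_sqrt (by positivity)]; simp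
    rw [← h4]; ring
  refine h2.trans ?_
  rw [Measure.volume_eq_prod, setIntegral_prod_mul
    (fun r : ℝ => (1 / (2 * Real.pi)) * (r ^ (1:ℝ) * Real.exp (-(1/2) * r ^ (2:ℝ))))
    (fun φ => G (Real.cos φ, Real.sin φ))]
  rw [integral_const_mul, integral_rpow_mul_exp_neg_mul_rpow (by norm_num) (by norm_num)
    (by norm_num), intervalIntegral.integral_of_le (by linarith [Real.pi_pos]),
    integral_Ioc_eq_integral_Ioo]
  congr 1
  norm_num

lemma gw_piece (θ a b c : ℝ) (hab : a ≤ b)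
    (h : ∀ φ ∈ Set.Ioo a b, Real.sign (Real.cos φ) * Real.sign (Real.cos (φ - θ)) = c) :
    IntervalIntegrable (fun φ => Real.sign (Real.cos φ) * Real.sign (Real.cos (φ - θ)))
      volume a b ∧
    ∫ φ in a..b, Real.sign (Real.cos φ) * Real.sign (Real.cos (φ - θ)) = (b - a) * c := by
  have hae : (fun φ => Real.sign (Real.cos φ) * Real.sign (Real.cos (φ - θ)))
      =ᵐ[volume.restrict (Set.uIoc a b)] fun _ => c := by
    rw [Set.uIoc_of_le hab, ← Measure.restrict_congr_set Ioo_ae_eq_Ioc]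
    filter_upwards [ae_restrict_mem measurableSet_Ioo] with φ hφ using h φ hφ
  constructor
  · exact (intervalIntegrable_const (c := c)).congr_ae hae.symm
  · rw [intervalIntegral.integral_congr_ae_restrict hae]; simp

lemma gw_angle (θ : ℝ) (h0 : 0 ≤ θ) (h1 : θ ≤ Real.pi) :
    ∫ φ in (-Real.pi)..Real.pi, Real.sign (Real.cos φ) * Real.sign (Real.cos (φ - θ))
      = 2 * Real.pi - 4 * θ := by
  have hp := Real.pi_pos
  have hper : Function.Periodic
      (fun φ => Real.sign (Real.cos φ) * Real.sign (Real.cos (φ - θ))) (2 * Real.pi) := by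
    intro φ
    simp only [Real.cos_add_two_pi]
    rw [show φ + 2 * Real.pi - θ = (φ - θ) + 2 * Real.pi by ring, Real.cos_add_two_pi]
  have := hper.intervalIntegral_add_eq (-Real.pi) (-(Real.pi / 2))
  rw [show -Real.pi + 2 * Real.pi = Real.pi by ring] at this
  rw [this]
  obtain ⟨i1, e1⟩ := gw_piece θ (-(Real.pi / 2)) (θ - Real.pi / 2) (-1) (by linarith) (by
    rintro φ ⟨ha, hb⟩
    rw [Real.sign_of_pos (Real.cos_pos_of_mem_Ioo ⟨by linarith, by linarith⟩),
      ← Real.cos_neg (φ - θ),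
      Real.sign_of_neg (Real.cos_neg_of_pi_div_two_lt_of_lt (by linarith) (by linarith))]
    norm_num)
  obtain ⟨i2, e2⟩ := gw_piece θ (θ - Real.pi / 2) (Real.pi / 2) 1 (by linarith) (by
    rintro φ ⟨ha, hb⟩
    rw [Real.sign_of_pos (Real.cos_pos_of_mem_Ioo ⟨by linarith, by linarith⟩),
      Real.sign_of_pos (Real.cos_pos_of_mem_Ioo ⟨by linarith, by linarith⟩)]
    norm_num)
  obtain ⟨i3, e3⟩ := gw_piece θ (Real.pi / 2) (θ + Real.pi / 2) (-1) (by linarith) (by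
    rintro φ ⟨ha, hb⟩
    rw [Real.sign_of_neg (Real.cos_neg_of_pi_div_two_lt_of_lt (by linarith) (by linarith)),
      Real.sign_of_pos (Real.cos_pos_of_mem_Ioo ⟨by linarith, by linarith⟩)]
    norm_num)
  obtain ⟨i4, e4⟩ := gw_piece θ (θ + Real.pi / 2) (-(Real.pi / 2) + 2 * Real.pi) 1
    (by linarith) (by
    rintro φ ⟨ha, hb⟩
    rw [Real.sign_of_neg (Real.cos_neg_of_pi_div_two_lt_of_lt (by linarith) (by linarith)),
      Real.sign_of_neg (Real.cos_neg_of_pi_div_two_lt_of_lt (by linarith) (by linarith))]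
    norm_num)
  rw [← intervalIntegral.integral_add_adjacent_intervals ((i1.trans i2).trans i3) i4,
    ← intervalIntegral.integral_add_adjacent_intervals (i1.trans i2) i3,
    ← intervalIntegral.integral_add_adjacent_intervals i1 i2, e1, e2, e3, e4]
  ring

lemma gw_measurable_sign : Measurable Real.sign := by
  unfold Real.sign
  exact Measurable.ite measurableSet_Iio measurable_const
    (Measurable.ite measurableSet_Ioi measurable_const measurable_const)

lemma gw_sign_mul (r a : ℝ) (hr : 0 < r) : Real.sign (r * a) = Real.sign a := by
  rcases lt_trichotomy a 0 with h | h | h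
  · rw [Real.sign_of_neg h, Real.sign_of_neg (mul_neg_of_pos_of_neg hr h)]
  · simp [h]
  · rw [Real.sign_of_pos h, Real.sign_of_pos (mul_pos hr h)]

lemma gw_abs_sign (a : ℝ) : |Real.sign a| ≤ 1 := by
  rcases Real.sign_apply_eq a with h | h | h <;> simp [h]

lemma gw_dot_bound {d : ℕ} (u v : Fin d → ℝ) (hu : ∑ k, u k ^ 2 = 1) (hv : ∑ k, v k ^ 2 = 1) :
    -1 ≤ u ⬝ᵥ v ∧ u ⬝ᵥ v ≤ 1 := by
  have h := Finset.sum_mul_sq_le_sq_mul_sq Finset.univ u v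
  rw [hu, hv] at h
  exact abs_le.mp ((sq_le_one_iff_abs_le_one _).mp (by simpa [dotProduct] using h))

lemma gw_integrable {d : ℕ} (u v : Fin d → ℝ) :
    Integrable (fun z => Real.sign (u ⬝ᵥ z) * Real.sign (v ⬝ᵥ z))
      (Measure.pi fun _ : Fin d => gaussianReal 0 1) := by
  have hm : ∀ u : Fin d → ℝ, Measurable (fun z => Real.sign (u ⬝ᵥ z)) := fun u =>
    gw_measurable_sign.comp (by unfold dotProduct; fun_prop)
  refine Integrable.of_bound ((hm u).mul (hm v)).aestronglyMeasurable 1 ?_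
  filter_upwards with z
  rw [Real.norm_eq_abs, abs_mul]
  exact mul_le_one₀ (gw_abs_sign _) (abs_nonneg _) (gw_abs_sign _)

lemma gw_sign_integral {d : ℕ} (u v : Fin d → ℝ) (hu : ∑ k, u k ^ 2 = 1)
    (hv : ∑ k, v k ^ 2 = 1) :
    ∫ z, Real.sign (u ⬝ᵥ z) * Real.sign (v ⬝ᵥ z)
      ∂(Measure.pi fun _ : Fin d => gaussianReal 0 1) =
    1 - (2 / Real.pi) * Real.arccos (u ⬝ᵥ v) := by
  obtain ⟨hb1, hb2⟩ := gw_dot_bound u v hu hv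
  set θ := Real.arccos (u ⬝ᵥ v) with hθ
  have hlaw := gw_law u v hu hv (Real.cos θ) (Real.sin θ) (Real.cos_arccos hb1 hb2).symm
    (by rw [add_comm]; exact Real.sin_sq_add_cos_sq θ)
  have hF : Measurable (fun p : ℝ × ℝ => Real.sign p.1 * Real.sign p.2) :=
    (gw_measurable_sign.comp measurable_fst).mul (gw_measurable_sign.comp measurable_snd)
  have e1 := integral_map (μ := Measure.pi fun _ : Fin d => gaussianReal 0 1)
    (φ := fun z => (u ⬝ᵥ z, v ⬝ᵥ z)) (f := fun p : ℝ × ℝ => Real.sign p.1 * Real.sign p.2)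
    (by unfold dotProduct; fun_prop) hF.aestronglyMeasurable
  simp only at e1
  rw [← e1, hlaw, integral_map (by fun_prop) hF.aestronglyMeasurable]
  rw [gw_polar (fun p : ℝ × ℝ => Real.sign p.1 *
    Real.sign (Real.cos θ * p.1 + Real.sin θ * p.2))]
  · have : ∀ φ, Real.cos θ * Real.cos φ + Real.sin θ * Real.sin φ = Real.cos (φ - θ) := by
      intro φ; rw [Real.cos_sub]; ring
    simp only [this]
    rw [gw_angle θ (Real.arccos_nonneg _) (Real.arccos_le_pi _)]
    field_simp [Real.pi_ne_zero]
    ring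
  · intro r a b hr
    simp only
    rw [show Real.cos θ * (r * a) + Real.sin θ * (r * b)
      = r * (Real.cos θ * a + Real.sin θ * b) by ring, gw_sign_mul _ _ hr, gw_sign_mul _ _ hr]

open MeasureTheory ProbabilityTheory Matrix in
theorem goemans_williamson_guarantee {d : ℕ}
    (w : Matrix (Fin d) (Fin d) ℝ) (hw_symm : w.IsSymm) (hw_nonneg : ∀ i j, 0 ≤ w i j)
    (X : Matrix (Fin d) (Fin d) ℝ) (hX : X.PosSemidef) (hXdiag : ∀ i, X i i = 1)
    (u : Fin d → Fin d → ℝ) (hu_norm : ∀ i, ∑ k, u i k ^ 2 = 1)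
    (hgram : ∀ i j, X i j = u i ⬝ᵥ u j)
    (α : ℝ)
    (hα : α = (2 / Real.pi) * sInf ((fun t : ℝ => Real.arccos t / (1 - t)) ''
      Set.Ico (-1 : ℝ) 1)) :
    α * ((1 / 2) * ∑ i, ∑ j, w i j * (1 - X i j)) ≤
      ∫ z, ((1 / 2) * ∑ i, ∑ j,
          w i j * (1 - Real.sign (u i ⬝ᵥ z) * Real.sign (u j ⬝ᵥ z)))
        ∂(Measure.pi fun _ : Fin d => gaussianReal 0 1) := by
  have hint : ∀ i j, Integrable (fun z => w i j *
      (1 - Real.sign (u i ⬝ᵥ z) * Real.sign (u j ⬝ᵥ z)))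
      (Measure.pi fun _ : Fin d => gaussianReal 0 1) := fun i j =>
    ((integrable_const 1).sub (gw_integrable (u i) (u j))).const_mul _
  have hval : ∫ z, ((1 / 2) * ∑ i, ∑ j,
          w i j * (1 - Real.sign (u i ⬝ᵥ z) * Real.sign (u j ⬝ᵥ z)))
        ∂(Measure.pi fun _ : Fin d => gaussianReal 0 1) =
      (1 / 2) * ∑ i, ∑ j, w i j * ((2 / Real.pi) * Real.arccos (X i j)) := by
    rw [integral_const_mul, integral_finsetSum _
      (fun i _ => integrable_finsetSum _ (fun j _ => hint i j))]
    congr 1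
    refine Finset.sum_congr rfl fun i _ => ?_
    rw [integral_finsetSum _ (fun j _ => hint i j)]
    refine Finset.sum_congr rfl fun j _ => ?_
    rw [integral_const_mul, integral_sub (integrable_const 1) (gw_integrable (u i) (u j)),
      gw_sign_integral _ _ (hu_norm i) (hu_norm j), hgram]
    simp
  rw [hval, mul_left_comm]
  refine mul_le_mul_of_nonneg_left ?_ (by norm_num)
  rw [Finset.mul_sum]
  refine Finset.sum_le_sum fun i _ => ?_
  rw [Finset.mul_sum]
  refine Finset.sum_le_sum fun j _ => ?_
  rw [mul_left_comm]
  refine mul_le_mul_of_nonneg_left ?_ (hw_nonneg i j)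
  obtain ⟨hb1, hb2⟩ := gw_dot_bound _ _ (hu_norm i) (hu_norm j)
  rw [← hgram] at hb1 hb2
  rw [hα, mul_assoc]
  refine mul_le_mul_of_nonneg_left ?_ (by positivity)
  rcases hb2.lt_or_eq with hlt | heq
  · rw [← le_div_iff₀ (by linarith)]
    refine csInf_le ⟨0, ?_⟩ ⟨X i j, ⟨hb1, hlt⟩, rfl⟩
    rintro _ ⟨t, ⟨-, ht⟩, rfl⟩
    exact div_nonneg (Real.arccos_nonneg _) (by linarith)
  · rw [heq]; simp
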